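/- For every mad family 𝒜 on ω, the filter F(𝒜) is a completely meager P⁺-filter. -/

import Mathlib

open Set Filter

/-- The characteristic function of a set, viewing `𝒫(α)` inside the Cantor space `α → Bool`. -/
noncomputable def chi {α : Type*} (X : Set α) : α → Bool :=
  fun n => @decide (n ∈ X) (Classical.propDecidable _)

/-- A family of subsets of `α` viewed as a subset of the Cantor space `α → Bool`. -/
noncomputable def toCantor {α : Type*} (A : Set (Set α)) : Set (α → Bool) := chi '' A

/-- A family of subsets of `α` is meager if it is meager as a subset of the Cantor space. -/
def MeagerFamily {α : Type*} (A : Set (Set α)) : Prop := IsMeagre (toCantor A)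

/-- A family of subsets of `α` has the Baire property if, viewed in the Cantor space,
it differs from an open set by a meager set. -/
def HasBP {α : Type*} (A : Set (Set α)) : Prop :=
  ∃ U : Set (α → Bool), IsOpen U ∧ IsMeagre (symmDiff (toCantor A) U)

/-- `A` has the Baire property relative to `C ⊆ 2^α`: the trace of `A` on `C` differs from a
relatively open subset of `C` by a set meager in `C`. -/
def RelBP {α : Type*} (A : Set (Set α)) (C : Set (α → Bool)) : Prop :=
  ∃ O : Set C, IsOpen O ∧ IsMeagre (symmDiff (Subtype.val ⁻¹' (toCantor A)) O)

/-- Talagrand's strong Baire property: the filter has the Baire property relative to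
every closed subset of the Cantor space. -/
def StrongBP {α : Type*} (F : Filter α) : Prop :=
  ∀ C : Set (α → Bool), IsClosed C → RelBP F.sets C

/-- `F⁺`: the sets whose complement is not in `F`, i.e. the sets compatible with `F`. -/
def Fplus {α : Type*} (F : Filter α) : Set (Set α) := {X | Xᶜ ∉ F}

/-- `F` is completely meager if for every `X ∈ F⁺` the filter generated by `F ∪ {X}` is meager. -/
def CompletelyMeager {α : Type*} (F : Filter α) : Prop :=
  ∀ X ∈ Fplus F, MeagerFamily (F ⊓ 𝓟 X).sets

/-- `F` is weakly hereditarily meager if for every `f`, either some fiber `f⁻¹(i)` is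
compatible with `F`, or the image filter `f(F)` is meager. -/
def WeaklyHereditarilyMeager {α : Type*} (F : Filter α) : Prop :=
  ∀ f : α → ℕ, (∃ i : ℕ, f ⁻¹' {i} ∈ Fplus F) ∨ MeagerFamily (Filter.map f F).sets

/-- `F` is hereditarily meager if for every `f`, the image filter `f(F)` either contains
a finite set (is improper) or is meager. -/
def HereditarilyMeager {α : Type*} (F : Filter α) : Prop :=
  ∀ f : α → ℕ, (∃ Y ∈ Filter.map f F, Y.Finite) ∨ MeagerFamily (Filter.map f F).sets

/-- `F` is a P⁺-filter: every ⊆*-decreasing sequence from `F⁺` has a pseudo-intersection in `F⁺`. -/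
def PPlusFilter {α : Type*} (F : Filter α) : Prop :=
  ∀ X : ℕ → Set α, (∀ n, X n ∈ Fplus F) → (∀ n, (X (n + 1) \ X n).Finite) →
    ∃ Y ∈ Fplus F, ∀ n, (Y \ X n).Finite

/-- `F` is a strong P⁺-filter: for every sequence from `F⁺` there is `f : ω → ω` such that
every `Y ∈ F` meets `Xₙ ∩ [0, f(n))` for all but finitely many `n`. -/
def StrongPPlusFilter (F : Filter ℕ) : Prop :=
  ∀ X : ℕ → Set ℕ, (∀ n, X n ∈ Fplus F) →
    ∃ f : ℕ → ℕ, ∀ Y ∈ F, ∀ᶠ n in Filter.atTop, (Y ∩ X n ∩ Set.Iio (f n)).Nonempty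

/-- `F` is an Fσ filter: as a subset of Cantor space it is a countable union of closed sets. -/
def IsFsigmaFilter (F : Filter ℕ) : Prop :=
  ∃ C : ℕ → Set (ℕ → Bool), (∀ n, IsClosed (C n)) ∧ toCantor F.sets = ⋃ n, C n

/-- An almost disjoint family: an infinite family of infinite sets with pairwise finite
intersections. -/
def ADFamily (𝒜 : Set (Set ℕ)) : Prop :=
  𝒜.Infinite ∧ (∀ A ∈ 𝒜, A.Infinite) ∧
    ∀ A ∈ 𝒜, ∀ B ∈ 𝒜, A ≠ B → (A ∩ B).Finite

/-- A maximal almost disjoint family. -/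
def MadFamily (𝒜 : Set (Set ℕ)) : Prop :=
  ADFamily 𝒜 ∧ ∀ X : Set ℕ, X.Infinite → ∃ A ∈ 𝒜, (X ∩ A).Infinite

/-- `F(𝒜)`: the filter generated by the complements of members of `𝒜` and the cofinite sets. -/
def madFilter (𝒜 : Set (Set ℕ)) : Filter ℕ :=
  Filter.cofinite ⊓ ⨅ A ∈ 𝒜, 𝓟 Aᶜ

/-- `I(𝒜)`: the ideal generated by `𝒜`, i.e. sets covered by finitely many members of `𝒜`
together with a finite set. -/
def madIdeal (𝒜 : Set (Set ℕ)) : Set (Set ℕ) :=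
  {X | ∃ s : Finset (Set ℕ), ↑s ⊆ 𝒜 ∧ (X \ ⋃ A ∈ s, (A : Set ℕ)).Finite}

/-- The Fubini product `F ⊗ G` of two filters. -/
def tensor {α β : Type*} (F : Filter α) (G : Filter β) : Filter (α × β) where
  sets := {X | {n | {m | (n, m) ∈ X} ∈ G} ∈ F}
  univ_sets := by simp
  sets_of_superset := by
    intro X Y hX hXY
    simp only [Set.mem_setOf_eq] at *
    filter_upwards [hX] with n hn
    filter_upwards [hn] with m hm
    exact hXY hm
  inter_sets := by
    intro X Y hX hY
    simp only [Set.mem_setOf_eq] at *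
    filter_upwards [hX, hY] with n h1 h2
    filter_upwards [h1, h2] with m hm1 hm2
    exact ⟨hm1, hm2⟩

/-- A dominating family of functions. -/
def Dominating (D : Set (ℕ → ℕ)) : Prop :=
  ∀ g : ℕ → ℕ, ∃ f ∈ D, ∀ᶠ n in Filter.atTop, g n ≤ f n

/-- The dominating number `𝔡`. -/
noncomputable def frakD : Cardinal :=
  sInf {c : Cardinal | ∃ D : Set (ℕ → ℕ), Dominating D ∧ Cardinal.mk D = c}

lemma mem_madFilter_iff (𝒜 : Set (Set ℕ)) (X : Set ℕ) :
    X ∈ madFilter 𝒜 ↔ ∃ s : Set (Set ℕ), s.Finite ∧ s ⊆ 𝒜 ∧ (Xᶜ \ ⋃₀ s).Finite := by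
  constructor
  · intro hX
    let G : Filter ℕ :=
      { sets := {X | ∃ s : Set (Set ℕ), s.Finite ∧ s ⊆ 𝒜 ∧ (Xᶜ \ ⋃₀ s).Finite}
        univ_sets := ⟨∅, by simp⟩
        sets_of_superset := by
          rintro X Y ⟨s, h1, h2, h3⟩ hXY
          refine ⟨s, h1, h2, h3.subset ?_⟩
          rintro x ⟨hx, hx'⟩
          exact ⟨fun h => hx (hXY h), hx'⟩
        inter_sets := by
          rintro X Y ⟨s, h1, h2, h3⟩ ⟨t, k1, k2, k3⟩
          refine ⟨s ∪ t, h1.union k1, union_subset h2 k2, (h3.union k3).subset ?_⟩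
          rintro x ⟨hx, hx'⟩
          rw [sUnion_union] at hx'
          by_cases hxX : x ∈ X
          · exact Or.inr ⟨fun h => hx ⟨hxX, h⟩, fun h => hx' (Or.inr h)⟩
          · exact Or.inl ⟨hxX, fun h => hx' (Or.inl h)⟩ }
    have hG : G ≤ madFilter 𝒜 := by
      refine le_inf ?_ (le_iInf₂ fun A hA => ?_)
      · intro Y hY
        exact ⟨∅, by simp, by simp, by simpa using hY⟩
      · rw [le_principal_iff]
        exact ⟨{A}, by simp, by simpa using hA, by simp⟩
    exact hG hX
  · rintro ⟨s, h1, h2, h3⟩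
    have a : (Xᶜ \ ⋃₀ s)ᶜ ∈ madFilter 𝒜 :=
      mem_inf_of_left (by simpa using h3)
    have b : (⋂ A ∈ s, Aᶜ) ∈ madFilter 𝒜 := by
      rw [biInter_mem h1]
      intro A hA
      exact mem_inf_of_right (mem_iInf_of_mem A (mem_iInf_of_mem (h2 hA) (mem_principal_self _)))
    filter_upwards [a, b] with x hx hx'
    by_contra hxX
    refine hx ⟨hxX, ?_⟩
    rintro ⟨A, hA, hxA⟩
    simp only [mem_iInter] at hx'
    exact hx' A hA hxA

lemma mem_Fplus_iff (𝒜 : Set (Set ℕ)) (X : Set ℕ) :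
    X ∈ Fplus (madFilter 𝒜) ↔
      ∀ s : Set (Set ℕ), s.Finite → s ⊆ 𝒜 → (X \ ⋃₀ s).Infinite := by
  unfold Fplus
  rw [mem_setOf_eq, mem_madFilter_iff]
  simp only [compl_compl]
  push Not
  rfl

lemma diff_biInter_finite (Z : ℕ → Set ℕ) (hd : ∀ n, (Z (n + 1) \ Z n).Finite) (n : ℕ) :
    (Z n \ ⋂ i ∈ Iic n, Z i).Finite := by
  induction n with
  | zero => simp
  | succ n ih =>
    refine (ih.union (hd n)).subset ?_
    rintro x ⟨hx, hx'⟩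
    by_cases hxn : x ∈ Z n
    · refine Or.inl ⟨hxn, fun h => hx' ?_⟩
      simp only [mem_iInter, mem_Iic] at h ⊢
      intro i hi
      rcases Nat.lt_or_eq_of_le hi with h1 | rfl
      · exact h i (by omega)
      · exact hx
    · exact Or.inr ⟨hx, hxn⟩

lemma exists_pseudo (Z : ℕ → Set ℕ) (hi : ∀ n, (Z n).Infinite)
    (hd : ∀ n, (Z (n + 1) \ Z n).Finite) :
    ∃ Y : Set ℕ, Y.Infinite ∧ ∀ n, (Y \ Z n).Finite := by
  have h1 : ∀ n, ∃ y ∈ ⋂ i ∈ Iic n, Z i, n < y := by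
    intro n
    have : (⋂ i ∈ Iic n, Z i).Infinite := by
      intro hf
      refine hi n ((hf.union (diff_biInter_finite Z hd n)).subset ?_)
      intro x hx
      by_cases h : x ∈ ⋂ i ∈ Iic n, Z i
      · exact Or.inl h
      · exact Or.inr ⟨hx, h⟩
    exact this.exists_gt n
  choose y hy hy' using h1
  refine ⟨range y, ?_, fun n => ?_⟩
  · refine infinite_of_forall_exists_gt fun a => ⟨y a, mem_range_self a, hy' a⟩
  · refine ((finite_Iio n).image y).subset ?_
    rintro _ ⟨⟨k, rfl⟩, hk⟩
    refine ⟨k, ?_, rfl⟩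
    by_contra hkn
    simp only [mem_Iio, not_lt] at hkn
    have := hy k
    simp only [mem_iInter, mem_Iic] at this
    exact hk (this n hkn)

lemma exists_seq (𝒜 : Set (Set ℕ)) (h : MadFamily 𝒜) (X : ℕ → Set ℕ)
    (hX : ∀ n, X n ∈ Fplus (madFilter 𝒜)) (hd : ∀ n, (X (n + 1) \ X n).Finite) :
    ∃ A B : ℕ → Set ℕ, Function.Injective A ∧ (∀ k, A k ∈ 𝒜) ∧ (∀ k, (B k).Infinite) ∧
      (∀ k, B k ⊆ A k) ∧ ∀ k n, (B k \ X n).Finite := by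
  let S : Set (Set ℕ) := {A | A ∈ 𝒜 ∧ ∃ B : Set ℕ, B.Infinite ∧ B ⊆ A ∧ ∀ n, (B \ X n).Finite}
  have hS : S.Infinite := by
    intro hS
    obtain ⟨Y, hY, hYZ⟩ := exists_pseudo (fun n => X n \ ⋃₀ S)
      (fun n => (mem_Fplus_iff 𝒜 (X n)).1 (hX n) S hS (fun A hA => hA.1))
      (fun n => (hd n).subset (by
        rintro x ⟨⟨h1, h2⟩, h3⟩
        exact ⟨h1, fun h4 => h3 ⟨h4, h2⟩⟩))
    obtain ⟨A, hA, hYA⟩ := h.2 Y hY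
    have hAS : A ∈ S := by
      refine ⟨hA, Y ∩ A, hYA, inter_subset_right, fun n => (hYZ n).subset ?_⟩
      rintro x ⟨⟨h1, h2⟩, h3⟩
      exact ⟨h1, fun h4 => h3 h4.1⟩
    refine hYA ((hYZ 0).subset ?_)
    rintro x ⟨h1, h2⟩
    exact ⟨h1, fun h4 => h4.2 ⟨A, hAS, h2⟩⟩
  let e := hS.natEmbedding
  choose B hB using fun k => (e k).2.2
  exact ⟨fun k => (e k : Set ℕ), B, fun i j hij => e.injective (Subtype.ext hij),
    fun k => (e k).2.1, fun k => (hB k).1, fun k => (hB k).2.1, fun k => (hB k).2.2⟩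

lemma inter_sUnion_finite (𝒜 : Set (Set ℕ)) (h : MadFamily 𝒜) (A : Set ℕ) (hA : A ∈ 𝒜)
    (s : Set (Set ℕ)) (hs : s.Finite) (hs' : s ⊆ 𝒜) (hAs : A ∉ s) : (A ∩ ⋃₀ s).Finite := by
  rw [sUnion_eq_biUnion, inter_iUnion₂]
  exact hs.biUnion fun C hC => h.1.2.2 A hA C (hs' hC) (fun e => hAs (e ▸ hC))

lemma exists_notMem_seq (A : ℕ → Set ℕ) (hA : Function.Injective A) (s : Set (Set ℕ))
    (hs : s.Finite) : ∃ k, A k ∉ s := by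
  by_contra! hc
  exact (infinite_range_of_injective hA) (hs.subset (range_subset_iff.2 hc))

lemma isMeagre_tail (B : Set ℕ) (hB : B.Infinite) (m : ℕ) :
    IsMeagre {f : ℕ → Bool | ∀ k ∈ B, m ≤ k → f k = true} := by
  apply IsNowhereDense.isMeagre
  have hc : IsClosed {f : ℕ → Bool | ∀ k ∈ B, m ≤ k → f k = true} := by
    simp only [setOf_forall]
    refine isClosed_iInter fun k => isClosed_iInter fun _ => isClosed_iInter fun _ => ?_
    exact isClosed_eq (continuous_apply k) continuous_const
  rw [hc.isNowhereDense_iff, eq_empty_iff_forall_notMem]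
  intro f hf
  have ht : Tendsto (fun k => Function.update f k false) atTop (nhds f) := by
    rw [tendsto_pi_nhds]
    intro i
    apply tendsto_const_nhds.congr'
    filter_upwards [eventually_gt_atTop i] with k hk
    rw [Function.update_of_ne hk.ne]
  have h1 := ht.eventually (mem_interior_iff_mem_nhds.1 hf)
  obtain ⟨N, hN⟩ := eventually_atTop.1 h1
  obtain ⟨k, hk, hk'⟩ := hB.exists_gt (max N m)
  have := hN k (by omega) k hk (by omega)
  simp at this

/-- For every mad family `𝒜` on `ω`, the filter `F(𝒜)` is a completely meager P⁺-filter. -/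
theorem stmt11 (𝒜 : Set (Set ℕ)) (h : MadFamily 𝒜) :
    CompletelyMeager (madFilter 𝒜) ∧ PPlusFilter (madFilter 𝒜) := by
  constructor
  · intro X hX
    obtain ⟨A, B, hinj, hA, hB, hBA, hBX⟩ := exists_seq 𝒜 h (fun _ => X) (fun _ => hX) (by simp)
    have hm : IsMeagre (⋃ k, ⋃ m, {f : ℕ → Bool | ∀ i ∈ B k, m ≤ i → f i = true}) :=
      isMeagre_iUnion fun k => isMeagre_iUnion fun m => isMeagre_tail (B k) (hB k) m
    refine IsMeagre.mono ?_ hm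
    rintro _ ⟨Y, hY, rfl⟩
    have hY' : Xᶜ ∪ Y ∈ madFilter 𝒜 := by
      have : Y ∈ madFilter 𝒜 ⊓ 𝓟 X := hY
      rw [mem_inf_principal] at this
      filter_upwards [this] with x hx
      by_cases hxX : x ∈ X
      · exact Or.inr (hx hxX)
      · exact Or.inl hxX
    obtain ⟨s, hs, hs', hf⟩ := (mem_madFilter_iff _ _).1 hY'
    obtain ⟨k, hk⟩ := exists_notMem_seq A hinj s hs
    have hfin : (B k \ Y).Finite := by
      refine ((hBX k 0).union (hf.union
        (inter_sUnion_finite 𝒜 h (A k) (hA k) s hs hs' hk))).subset ?_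
      rintro x ⟨h1, h2⟩
      by_cases hxX : x ∈ X
      · by_cases hxs : x ∈ ⋃₀ s
        · exact Or.inr (Or.inr ⟨hBA k h1, hxs⟩)
        · refine Or.inr (Or.inl ⟨?_, hxs⟩)
          rintro (h3 | h3)
          · exact h3 hxX
          · exact h2 h3
      · exact Or.inl ⟨h1, hxX⟩
    obtain ⟨m, hm⟩ := hfin.bddAbove
    simp only [mem_iUnion]
    refine ⟨k, m + 1, fun i hi hmi => ?_⟩
    have : i ∈ Y := by
      by_contra hiY
      have := hm ⟨hi, hiY⟩
      omega
    simp [chi, this]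
  · intro X hX hd
    obtain ⟨A, B, hinj, hA, hB, hBA, hBX⟩ := exists_seq 𝒜 h X hX hd
    refine ⟨⋃ k, (B k ∩ ⋂ i ∈ Iic k, X i), ?_, fun n => ?_⟩
    · rw [mem_Fplus_iff]
      intro s hs hs' hf
      obtain ⟨k, hk⟩ := exists_notMem_seq A hinj s hs
      refine hB k (((hBX k k).union ((diff_biInter_finite X hd k).union (hf.union
        (inter_sUnion_finite 𝒜 h (A k) (hA k) s hs hs' hk)))).subset ?_)
      intro x hx
      by_cases h1 : x ∈ X k
      · by_cases h2 : x ∈ ⋂ i ∈ Iic k, X i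
        · by_cases h3 : x ∈ ⋃₀ s
          · exact Or.inr (Or.inr (Or.inr ⟨hBA k hx, h3⟩))
          · exact Or.inr (Or.inr (Or.inl ⟨mem_iUnion.2 ⟨k, hx, h2⟩, h3⟩))
        · exact Or.inr (Or.inl ⟨h1, h2⟩)
      · exact Or.inl ⟨hx, h1⟩
    · refine ((finite_Iio n).biUnion fun k _ => hBX k n).subset ?_
      rintro x ⟨hx, hxn⟩
      obtain ⟨k, hk1, hk2⟩ := mem_iUnion.1 hx
      simp only [mem_iInter, mem_Iic] at hk2
      simp only [mem_iUnion, mem_Iio]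
      refine ⟨k, ?_, hk1, hxn⟩
      by_contra hkn
      exact hxn (hk2 n (by omega))
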